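/- arXiv:0902.0892 — 6 statements merged into one kernel-verified Lean document; each statement's English description precedes it below -/
import Mathlib

section
/- Maximum-likelihood certificate property of the LP receiver: suppose (ḡ*, p*) maximizes the cost λ·g = Σ_{i∈Y} Σ_{α∈A_i} (log h_i(α)) g_i^{(α)} over the polytope Q, and all coordinates of p* are integers. Then the unique configuration x ∈ B with ḡ* = Ξ̄(x) maximizes Σ_{i∈Y} log h_i(x_i) over B, i.e. the receiver output is the optimum configuration. -/
/-!
Nonnegative integers with sum one are the indicator of a single index, so an integral `p*` selects
exactly one local word `b j ∈ B_j` for every `j` (`exists_eq_ite_of_int`). The marginal constraints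
say that `g*` restricted to `I_j` is the indicator vector of `b j`; since `g*` does not depend on
`j`, the words `b j` agree on overlaps and glue to a configuration `x ∈ B` with `g* = Ξ̄(x)`.

Conversely every `y ∈ B` gives the point `(Ξ̄(y), indicator of the restrictions of y)` of `Q`
(`exists_memQ_XiBar`), and the LP cost at `Ξ̄(y)` is `Σ_{i ∈ Y} log h_i(y_i)` (`cost_XiBar`).
Optimality of `g*` over `Q` therefore gives optimality of `x` over `B`. Uniqueness of `x` is the
injectivity of `Ξ̄`.
-/

open Finset

section Setup

variable {I : Type} [Fintype I] [DecidableEq I]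
  (A : I → Type) [∀ i, Fintype (A i)] [∀ i, DecidableEq (A i)]
  {L : Type} [Fintype L]
  (Ij : L → Finset I)
  (Bj : (j : L) → Finset ((i : (Ij j : Finset I)) → A i.val))

/-- The global behavior `B`. -/
def GlobalB : Set (∀ i, A i) :=
  {x | ∀ j : L, (fun i : (Ij j : Finset I) => x i.val) ∈ Bj j}

/-- Membership in the polytope `Q`. -/
def memQ (g : ∀ i, A i → ℝ)
    (p : (j : L) → {b // b ∈ Bj j} → ℝ) : Prop :=
  (∀ j b, 0 ≤ p j b) ∧
  (∀ j, ∑ b, p j b = 1) ∧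
  (∀ j (i : (Ij j : Finset I)) (α : A i.val),
    g i.val α = ∑ b : {b // b ∈ Bj j}, (if b.val i = α then p j b else 0))

/-- The concatenated indicator vector `Ξ̄(x) ∈ ℝ^N` of a configuration. -/
def XiBar (x : ∀ i, A i) : ∀ i, A i → ℝ :=
  fun i α => if x i = α then 1 else 0

end Setup

lemma exists_eq_ite_of_int {ι : Type*} [Fintype ι] [DecidableEq ι] (f : ι → ℝ)
    (h0 : ∀ c, 0 ≤ f c) (h1 : ∑ c, f c = 1) (hint : ∀ c, ∃ n : ℤ, f c = n) :
    ∃ b, ∀ c, f c = if c = b then 1 else 0 := by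
  obtain ⟨b, hb⟩ : ∃ b, f b ≠ 0 := by
    by_contra! hc
    simp [hc] at h1
  have hb1 : 1 ≤ f b := by
    obtain ⟨n, hn⟩ := hint b
    have hlt : 0 < f b := lt_of_le_of_ne (h0 b) (Ne.symm hb)
    rw [hn] at hlt ⊢
    exact_mod_cast hlt
  have hsplit := Finset.add_sum_erase univ f (mem_univ b)
  have hnn : 0 ≤ ∑ c ∈ univ.erase b, f c := sum_nonneg fun c _ => h0 c
  have hrest : ∑ c ∈ univ.erase b, f c = 0 := by linarith
  refine ⟨b, fun c => ?_⟩
  split_ifs with hcb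
  · subst hcb
    linarith
  · exact (sum_eq_zero_iff_of_nonneg fun c _ => h0 c).1 hrest c (by simp [hcb])

lemma XiBar_injective {I : Type} (A : I → Type) [∀ i, DecidableEq (A i)] :
    Function.Injective (XiBar A) := by
  intro x y hxy
  funext i
  have := congrFun (congrFun hxy i) (y i)
  simpa [XiBar] using this

lemma cost_XiBar {I : Type} (A : I → Type) [∀ i, Fintype (A i)] [∀ i, DecidableEq (A i)]
    (Y : Finset I) (w : (i : I) → A i → ℝ) (x : ∀ i, A i) :
    ∑ i ∈ Y, ∑ α : A i, w i α * XiBar A x i α = ∑ i ∈ Y, w i (x i) := by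
  simp [XiBar]

/-- The vector `Ξ̄(y)` of a valid configuration extends to a point of `Q`: take for `p j`
the indicator of the restriction of `y` to `I_j`. -/
lemma exists_memQ_XiBar {I : Type} (A : I → Type) [∀ i, DecidableEq (A i)]
    {L : Type} (Ij : L → Finset I)
    (Bj : (j : L) → Finset ((i : (Ij j : Finset I)) → A i.val))
    (y : ∀ i, A i) (hy : y ∈ GlobalB A Ij Bj) :
    ∃ p, memQ A Ij Bj (XiBar A y) p := by
  classical
  refine ⟨fun j b => if b = ⟨fun i => y i.val, hy j⟩ then 1 else 0, ?_, ?_, ?_⟩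
  · intro j b
    dsimp only
    split_ifs <;> norm_num
  · intro j
    simp
  · intro j i α
    rw [Finset.sum_eq_single ⟨fun i => y i.val, hy j⟩]
    · simp [XiBar]
    · intro b _ hb
      simp [hb]
    · simp

/-- **ML certificate property.** If `(ḡ*, p*)` maximizes the LP cost
`λ·g = Σ_{i∈Y} Σ_{α∈A_i} (log h_i(α)) g_i^{(α)}` over `Q` and all coordinates of `p*` are
integers, then the unique configuration `x ∈ B` with `ḡ* = Ξ̄(x)` maximizes
`Σ_{i∈Y} log h_i(x_i)` over `B`. -/
theorem stmt8
    {I : Type} [Fintype I] [DecidableEq I]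
    (A : I → Type) [∀ i, Fintype (A i)] [∀ i, DecidableEq (A i)]
    {L : Type} [Fintype L]
    (Ij : L → Finset I) (hIjne : ∀ j, (Ij j).Nonempty)
    (Bj : (j : L) → Finset ((i : (Ij j : Finset I)) → A i.val))
    (hBjne : ∀ j, (Bj j).Nonempty)
    (hA : ∀ i, 2 ≤ Fintype.card (A i))
    (hcover : ∀ i : I, ∃ j : L, i ∈ Ij j)
    (hBne : (GlobalB A Ij Bj).Nonempty)
    (Y : Finset I)
    (h : (i : I) → A i → ℝ) (hpos : ∀ i ∈ Y, ∀ α, 0 < h i α)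
    (gstar : ∀ i, A i → ℝ) (pstar : (j : L) → {b // b ∈ Bj j} → ℝ)
    (hmem : memQ A Ij Bj gstar pstar)
    (hmax : ∀ (g : ∀ i, A i → ℝ) (p : (j : L) → {b // b ∈ Bj j} → ℝ),
      memQ A Ij Bj g p →
      (∑ i ∈ Y, ∑ α : A i, Real.log (h i α) * g i α) ≤
        ∑ i ∈ Y, ∑ α : A i, Real.log (h i α) * gstar i α)
    (hint : ∀ j (b : {b // b ∈ Bj j}), ∃ n : ℤ, pstar j b = n) :
    ∃ x : ∀ i, A i, x ∈ GlobalB A Ij Bj ∧ gstar = XiBar A x ∧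
      (∀ y ∈ GlobalB A Ij Bj,
        ∑ i ∈ Y, Real.log (h i (y i)) ≤ ∑ i ∈ Y, Real.log (h i (x i))) ∧
      (∀ x' ∈ GlobalB A Ij Bj, gstar = XiBar A x' → x' = x) := by
  classical
  obtain ⟨h0, h1, hg⟩ := hmem
  choose b hb using fun j => exists_eq_ite_of_int (pstar j) (h0 j) (h1 j) (hint j)
  have hgb : ∀ j (i : (Ij j : Finset I)) (α : A i.val),
      gstar i.val α = if (b j).val i = α then 1 else 0 := by
    intro j i α
    rw [hg, Finset.sum_eq_single (b j)]
    · simp [hb]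
    · intro c _ hc
      simp [hb, hc]
    · simp
  choose J hJ using hcover
  let x : ∀ i, A i := fun i => (b (J i)).val ⟨i, hJ i⟩
  have hgx : gstar = XiBar A x := by
    funext i α
    exact hgb (J i) ⟨i, hJ i⟩ α
  -- On `I_j` both `x` and `b j` have indicator vector `g*`, hence they agree there.
  have hx : x ∈ GlobalB A Ij Bj := by
    intro j
    have hxb : (fun i : (Ij j : Finset I) => x i.val) = (b j).val := by
      funext i
      have hi := hgb j i (x i.val)
      rw [hgx] at hi
      by_contra hne
      simp [XiBar, Ne.symm hne] at hi
    rw [hxb]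
    exact (b j).property
  refine ⟨x, hx, hgx, ?_, ?_⟩
  · intro y hy
    obtain ⟨p, hp⟩ := exists_memQ_XiBar A Ij Bj y hy
    have hle := hmax _ p hp
    rwa [hgx, cost_XiBar A Y (fun i α => Real.log (h i α)),
      cost_XiBar A Y (fun i α => Real.log (h i α))] at hle
  · intro x' _ hx'
    exact XiBar_injective A (hx'.symm.trans hgx)
end

section
/- Equivalence of the two linear programs (Theorem 1): a point (ḡ, p) ∈ Q maximizes λ·g = Σ_{i∈Y} Σ_{α∈A_i} (log h_i(α)) g_i^{(α)} over Q and has all coordinates integral if and only if the point (g̃, p) = V^{−1}(ḡ, p) ∈ Q̃ maximizes λ̃·g̃ = Σ_{i∈Y} Σ_{α∈A_i^−} log(h_i(α)/h_i(α_i)) g̃_i^{(α)} over Q̃ and has all coordinates integral; and in this case there is a unique x ∈ B with ḡ = Ξ̄(x) and g̃_i^{(α)} = 1[x_i = α] for all i ∈ Y, α ∈ A_i^−. -/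
/-!
Both linear programs have the same `p`-coordinates. In `Q` and in `Q̃` every `p_j` is a probability
vector on `B_j`, so each of its one-coordinate marginals (`marg`) sums to one over the alphabet
(`sum_marg`). Hence the value of a marginal at the reference symbol `asel i` is determined by its
other values: the constraints which `Q̃` omits at that symbol follow from those it keeps, so `V`
maps `Q̃` into `Q` (`memQ_Vmap`), and its inverse just forgets the coordinates of `ḡ` outside
`Y` or at a reference symbol (`memQt_restr`, `Vmap_restr`, `restr_Vmap`).

By the same normalisation, `log h_i(α) = log (h_i(α) / h_i(asel i)) + log h_i(asel i)` shows that
`λ·g` exceeds `λ̃·g̃` by `∑_{i ∈ Y} log h_i(asel i)`, a constant (`objective_eq`), so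
maximality transfers along `V`. Integrality transfers because `ḡ` consists of sums of
coordinates of `p`.

Finally, an integral probability vector `p_j` is a point mass at some `b_j ∈ B_j`
(`exists_point_mass`). The marginals of the `p_j` agree on shared coordinates, so the local words
`b_j` are the restrictions of a single configuration `x`, which therefore lies in the global
behavior and satisfies `ḡ = Ξ̄(x)` (`exists_config`); it is unique since `Ξ̄` is injective.
-/

open Finset

section Setup

variable {I : Type} [Fintype I] [DecidableEq I]
  (A : I → Type) [∀ i, Fintype (A i)] [∀ i, DecidableEq (A i)]
  {L : Type} [Fintype L]
  (Ij : L → Finset I)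
  (Bj : (j : L) → Finset ((i : (Ij j : Finset I)) → A i.val))

variable (Y : Finset I) (asel : ∀ i, A i) (t : I → L) (ht : ∀ i ∉ Y, i ∈ Ij (t i))

/-- Membership in the polytope `Q̃`. -/
def memQt
    (gt : (i : (Y : Finset I)) → {α : A i.val // α ≠ asel i.val} → ℝ)
    (p : (j : L) → {b // b ∈ Bj j} → ℝ) : Prop :=
  (∀ j b, 0 ≤ p j b) ∧
  (∀ j, ∑ b, p j b = 1) ∧
  (∀ (i : (Y : Finset I)) (j : L) (hij : i.val ∈ Ij j)
      (α : {α : A i.val // α ≠ asel i.val}),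
    gt i α = ∑ b : {b // b ∈ Bj j},
      (if b.val ⟨i.val, hij⟩ = α.val then p j b else 0)) ∧
  (∀ (i : I) (hi : i ∉ Y) (j : L) (hij : i ∈ Ij j), j ≠ t i →
    ∀ (α : A i), α ≠ asel i →
      (∑ b : {b // b ∈ Bj j}, (if b.val ⟨i, hij⟩ = α then p j b else 0)) =
      (∑ b : {b // b ∈ Bj (t i)}, (if b.val ⟨i, ht i hi⟩ = α then p (t i) b else 0)))

/-- The map `V : Q̃ → Q`. -/
def Vmap
    (q : ((i : (Y : Finset I)) → {α : A i.val // α ≠ asel i.val} → ℝ) ×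
         ((j : L) → {b // b ∈ Bj j} → ℝ)) :
    (∀ i, A i → ℝ) × ((j : L) → {b // b ∈ Bj j} → ℝ) :=
  (fun i α =>
    if hi : i ∈ Y then
      (if hα : α = asel i then
        1 - ∑ β : {β : A i // β ≠ asel i}, q.1 ⟨i, hi⟩ β
      else q.1 ⟨i, hi⟩ ⟨α, hα⟩)
    else
      ∑ b : {b // b ∈ Bj (t i)}, (if b.val ⟨i, ht i hi⟩ = α then q.2 (t i) b else 0),
   q.2)

end Setup

section Helpers

set_option linter.unusedSectionVars false

variable {I : Type} [Fintype I] [DecidableEq I]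
  {A : I → Type} [∀ i, Fintype (A i)] [∀ i, DecidableEq (A i)]
  {L : Type} [Fintype L]
  {Ij : L → Finset I}
  {Bj : (j : L) → Finset ((i : (Ij j : Finset I)) → A i.val)}

/-- The marginal of the weight vector `p j` at coordinate `i`, evaluated at the symbol `α`. -/
def marg (p : (j : L) → {b // b ∈ Bj j} → ℝ) (j : L) (i : (Ij j : Finset I)) (α : A i.val) : ℝ :=
  ∑ b : {b // b ∈ Bj j}, (if b.val i = α then p j b else 0)

lemma sum_marg (p : (j : L) → {b // b ∈ Bj j} → ℝ) (j : L) (i : (Ij j : Finset I)) :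
    ∑ α, marg p j i α = ∑ b, p j b := by
  unfold marg
  rw [Finset.sum_comm]
  simp

/-- Two functions with equal total sums that agree away from `a` also agree at `a`. -/
lemma eq_of_agree_off {T : Type} [Fintype T] [DecidableEq T] (a : T) {f f' : T → ℝ}
    (hs : ∑ x, f x = ∑ x, f' x) (hne : ∀ x, x ≠ a → f x = f' x) (x : T) : f x = f' x := by
  by_cases hx : x = a
  · subst hx
    rw [Fintype.sum_eq_add_sum_subtype_ne f x, Fintype.sum_eq_add_sum_subtype_ne f' x] at hs
    have : ∑ y : {y // y ≠ x}, f y.val = ∑ y : {y // y ≠ x}, f' y.val :=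
      Finset.sum_congr rfl fun y _ => hne y.val y.2
    linarith
  · exact hne x hx

/-- The underlying forgetful map of `V⁻¹`: keep only the coordinates of `ḡ` indexed by
`i ∈ Y` and symbols other than the reference symbol. -/
def restr (Y : Finset I) (asel : ∀ i, A i) (g : ∀ i, A i → ℝ) :
    (i : (Y : Finset I)) → {α : A i.val // α ≠ asel i.val} → ℝ :=
  fun i α => g i.val α.val

lemma sum_g_eq_one (hcover : ∀ i : I, ∃ j : L, i ∈ Ij j)
    {g : ∀ i, A i → ℝ} {p : (j : L) → {b // b ∈ Bj j} → ℝ}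
    (hm : memQ A Ij Bj g p) (i : I) : ∑ α, g i α = 1 := by
  obtain ⟨j, hj⟩ := hcover i
  rw [← hm.2.1 j, ← sum_marg p j ⟨i, hj⟩]
  exact Finset.sum_congr rfl fun α _ => hm.2.2 j ⟨i, hj⟩ α

lemma memQt_restr {g : ∀ i, A i → ℝ} {p : (j : L) → {b // b ∈ Bj j} → ℝ}
    (Y : Finset I) (asel : ∀ i, A i) (t : I → L) (ht : ∀ i ∉ Y, i ∈ Ij (t i))
    (hm : memQ A Ij Bj g p) : memQt A Ij Bj Y asel t ht (restr Y asel g) p := by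
  refine ⟨hm.1, hm.2.1, fun i j hij α => hm.2.2 j ⟨i.val, hij⟩ α.val, ?_⟩
  intro i hi j hij _ α _
  exact (hm.2.2 j ⟨i, hij⟩ α).symm.trans (hm.2.2 (t i) ⟨i, ht i hi⟩ α)

lemma restr_Vmap (Y : Finset I) (asel : ∀ i, A i) (t : I → L) (ht : ∀ i ∉ Y, i ∈ Ij (t i))
    (gt : (i : (Y : Finset I)) → {α : A i.val // α ≠ asel i.val} → ℝ)
    (p : (j : L) → {b // b ∈ Bj j} → ℝ) :
    restr Y asel (Vmap A Ij Bj Y asel t ht (gt, p)).1 = gt := by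
  funext i α
  simp [restr, Vmap, α.2]

lemma sum_Vmap_of_mem (Y : Finset I) (asel : ∀ i, A i) (t : I → L)
    (ht : ∀ i ∉ Y, i ∈ Ij (t i))
    (gt : (i : (Y : Finset I)) → {α : A i.val // α ≠ asel i.val} → ℝ)
    (p : (j : L) → {b // b ∈ Bj j} → ℝ) {i : I} (hi : i ∈ Y) :
    ∑ α, (Vmap A Ij Bj Y asel t ht (gt, p)).1 i α = 1 := by
  rw [Fintype.sum_eq_add_sum_subtype_ne _ (asel i)]
  have : ∑ β : {β : A i // β ≠ asel i}, (Vmap A Ij Bj Y asel t ht (gt, p)).1 i β.val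
      = ∑ β : {β : A i // β ≠ asel i}, gt ⟨i, hi⟩ β :=
    Finset.sum_congr rfl fun β _ => by simp [Vmap, hi, β.2]
  rw [this]
  simp [Vmap, hi]

/-- `V` maps `Q̃` into `Q`: the constraints absent from `Q̃` are those at the reference symbols,
and they follow from the remaining ones by normalisation. -/
lemma memQ_Vmap {Y : Finset I} {asel : ∀ i, A i} {t : I → L} {ht : ∀ i ∉ Y, i ∈ Ij (t i)}
    {gt : (i : (Y : Finset I)) → {α : A i.val // α ≠ asel i.val} → ℝ}
    {p : (j : L) → {b // b ∈ Bj j} → ℝ} (hm : memQt A Ij Bj Y asel t ht gt p) :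
    memQ A Ij Bj (Vmap A Ij Bj Y asel t ht (gt, p)).1 p := by
  obtain ⟨h0, h1, hY, hN⟩ := hm
  refine ⟨h0, h1, ?_⟩
  rintro j ⟨i, hij⟩ α
  change _ = marg p j ⟨i, hij⟩ α
  revert α
  by_cases hi : i ∈ Y
  · apply eq_of_agree_off (asel i)
    · exact (sum_Vmap_of_mem Y asel t ht gt p hi).trans ((sum_marg p j ⟨i, hij⟩).trans (h1 j)).symm
    · intro α hα
      have := hY ⟨i, hi⟩ j hij ⟨α, hα⟩
      simpa [Vmap, hi, hα, marg] using this
  · have hV : ∀ α, (Vmap A Ij Bj Y asel t ht (gt, p)).1 i α = marg p (t i) ⟨i, ht i hi⟩ α := by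
      intro α
      simp [Vmap, hi, marg]
    by_cases hj : j = t i
    · subst hj
      exact hV
    · apply eq_of_agree_off (asel i)
      · rw [Finset.sum_congr rfl fun α _ => hV α]
        exact ((sum_marg p (t i) ⟨i, ht i hi⟩).trans (h1 _)).trans
          ((sum_marg p j ⟨i, hij⟩).trans (h1 j)).symm
      · intro α hα
        rw [hV]
        exact (hN i hi j hij hj α hα).symm

lemma Vmap_restr (hcover : ∀ i : I, ∃ j : L, i ∈ Ij j)
    {g : ∀ i, A i → ℝ} {p : (j : L) → {b // b ∈ Bj j} → ℝ}
    (Y : Finset I) (asel : ∀ i, A i) (t : I → L) (ht : ∀ i ∉ Y, i ∈ Ij (t i))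
    (hm : memQ A Ij Bj g p) : Vmap A Ij Bj Y asel t ht (restr Y asel g, p) = (g, p) := by
  -- Both sides lie in `Q` over the same `p`, and `p` determines `ḡ` because the `I_j` cover `I`.
  have hV := memQ_Vmap (memQt_restr Y asel t ht hm)
  refine Prod.ext ?_ rfl
  funext i α
  obtain ⟨j, hj⟩ := hcover i
  exact (hV.2.2 j ⟨i, hj⟩ α).trans (hm.2.2 j ⟨i, hj⟩ α).symm

/-- If each `g i` is normalised, the two objectives differ by `∑_{i ∈ Y} log h_i(asel i)`. -/
lemma objective_eq (Y : Finset I) (asel : ∀ i, A i) (h : (i : I) → A i → ℝ)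
    (hpos : ∀ i ∈ Y, ∀ α, 0 < h i α) (g : ∀ i, A i → ℝ) (hg : ∀ i, ∑ α, g i α = 1) :
    (∑ i ∈ Y, ∑ α : A i, Real.log (h i α) * g i α) =
      (∑ i : (Y : Finset I), ∑ α : {α : A i.val // α ≠ asel i.val},
        Real.log (h i.val α.val / h i.val (asel i.val)) * restr Y asel g i α) +
      ∑ i ∈ Y, Real.log (h i (asel i)) := by
  rw [← Finset.sum_coe_sort Y (fun i => ∑ α : A i, Real.log (h i α) * g i α),
    ← Finset.sum_coe_sort Y (fun i => Real.log (h i (asel i))), ← Finset.sum_add_distrib]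
  refine Finset.sum_congr rfl fun i _ => ?_
  have hlog : ∀ α : {α : A i.val // α ≠ asel i.val},
      Real.log (h i.val α.val / h i.val (asel i.val)) * restr Y asel g i α =
        Real.log (h i.val α.val) * g i.val α.val -
          Real.log (h i.val (asel i.val)) * g i.val α.val := by
    intro α
    rw [Real.log_div (hpos i.val i.2 _).ne' (hpos i.val i.2 _).ne', sub_mul]
    rfl
  have hs := hg i.val
  rw [Fintype.sum_eq_add_sum_subtype_ne _ (asel i.val)] at hs
  rw [Fintype.sum_eq_add_sum_subtype_ne _ (asel i.val), Finset.sum_congr rfl fun α _ => hlog α,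
    Finset.sum_sub_distrib, ← Finset.mul_sum]
  linear_combination (Real.log (h i.val (asel i.val))) * hs

/-- A probability vector with integer entries is a point mass. -/
lemma exists_point_mass {T : Type} [Fintype T] [DecidableEq T] (f : T → ℝ) (h0 : ∀ x, 0 ≤ f x)
    (h1 : ∑ x, f x = 1) (hint : ∀ x, ∃ n : ℤ, f x = n) :
    ∃ a, ∀ x, f x = if x = a then 1 else 0 := by
  have hex : ∃ a, f a ≠ 0 := by
    by_contra! hc
    simp [hc] at h1
  obtain ⟨a, ha⟩ := hex
  have hge : 1 ≤ f a := by
    obtain ⟨n, hn⟩ := hint a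
    have hp : 0 < f a := lt_of_le_of_ne (h0 a) ha.symm
    rw [hn] at hp ⊢
    exact_mod_cast hp
  refine ⟨a, fun x => ?_⟩
  rw [← Finset.add_sum_erase _ _ (Finset.mem_univ a)] at h1
  have hnn : 0 ≤ ∑ y ∈ Finset.univ.erase a, f y := Finset.sum_nonneg fun y _ => h0 y
  split_ifs with hx
  · rw [hx]
    linarith
  · have hle := Finset.single_le_sum (fun y _ => h0 y)
      (Finset.mem_erase.2 ⟨hx, Finset.mem_univ x⟩)
    linarith [h0 x]

/-- An integral point of `Q` comes from a configuration in the global behavior. -/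
lemma exists_config (hcover : ∀ i : I, ∃ j : L, i ∈ Ij j)
    {g : ∀ i, A i → ℝ} {p : (j : L) → {b // b ∈ Bj j} → ℝ}
    (hm : memQ A Ij Bj g p) (hint : ∀ j (b : {b // b ∈ Bj j}), ∃ n : ℤ, p j b = n) :
    ∃ x ∈ GlobalB A Ij Bj, g = XiBar A x := by
  choose b hb using fun j => exists_point_mass (p j) (hm.1 j) (hm.2.1 j) (hint j)
  have hg : ∀ j (i : (Ij j : Finset I)) (α : A i.val),
      g i.val α = if (b j).val i = α then 1 else 0 := by
    intro j i α
    rw [hm.2.2 j i α, Finset.sum_eq_single (b j)]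
    · simp [hb]
    · intro c _ hc
      simp [hb, hc]
    · simp
  choose s hs using hcover
  refine ⟨fun i => (b (s i)).val ⟨i, hs i⟩, ?_, ?_⟩
  · intro j
    have : (fun i : (Ij j : Finset I) => (b (s i.val)).val ⟨i.val, hs i.val⟩) = (b j).val := by
      funext i
      have h1 := hg j i ((b j).val i)
      rw [hg (s i.val) ⟨i.val, hs i.val⟩] at h1
      by_contra hne
      simp [hne] at h1
    rw [this]
    exact (b j).2
  · funext i α
    exact hg (s i) ⟨i, hs i⟩ α

lemma XiBar_injective_s9 : Function.Injective (XiBar A) := by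
  intro x y hxy
  funext i
  have := congrFun (congrFun hxy i) (y i)
  by_contra hne
  simp [XiBar, hne] at this

lemma g_integral (hcover : ∀ i : I, ∃ j : L, i ∈ Ij j)
    {g : ∀ i, A i → ℝ} {p : (j : L) → {b // b ∈ Bj j} → ℝ}
    (hm : memQ A Ij Bj g p) (hint : ∀ j (b : {b // b ∈ Bj j}), ∃ n : ℤ, p j b = n)
    (i : I) (α : A i) : ∃ n : ℤ, g i α = n := by
  obtain ⟨x, -, rfl⟩ := exists_config hcover hm hint
  exact ⟨if x i = α then 1 else 0, by simp [XiBar]⟩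

end Helpers

/-- **Theorem 1: equivalence of LP2 and LP3.** A point `(ḡ, p) ∈ Q` maximizes
`λ·g` over `Q` and is integral iff `(g̃, p) = V⁻¹(ḡ, p) ∈ Q̃` maximizes `λ̃·g̃` over `Q̃` and is
integral; and in this case there is a unique `x ∈ B` with `ḡ = Ξ̄(x)` and
`g̃_i^{(α)} = 𝟙[x_i = α]` for `i ∈ Y`, `α ∈ A_i⁻`. -/
theorem stmt9
    {I : Type} [Fintype I] [DecidableEq I]
    (A : I → Type) [∀ i, Fintype (A i)] [∀ i, DecidableEq (A i)]
    {L : Type} [Fintype L]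
    (Ij : L → Finset I) (hIjne : ∀ j, (Ij j).Nonempty)
    (Bj : (j : L) → Finset ((i : (Ij j : Finset I)) → A i.val))
    (hBjne : ∀ j, (Bj j).Nonempty)
    (hA : ∀ i, 2 ≤ Fintype.card (A i))
    (hcover : ∀ i : I, ∃ j : L, i ∈ Ij j)
    (hBne : (GlobalB A Ij Bj).Nonempty)
    (Y : Finset I) (asel : ∀ i, A i) (t : I → L) (ht : ∀ i ∉ Y, i ∈ Ij (t i))
    (h : (i : I) → A i → ℝ) (hpos : ∀ i ∈ Y, ∀ α, 0 < h i α)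
    (g : ∀ i, A i → ℝ) (p : (j : L) → {b // b ∈ Bj j} → ℝ)
    (hmem : memQ A Ij Bj g p)
    (gt : (i : (Y : Finset I)) → {α : A i.val // α ≠ asel i.val} → ℝ)
    (hgt : gt = fun i α => g i.val α.val) :
    memQt A Ij Bj Y asel t ht gt p ∧
    Vmap A Ij Bj Y asel t ht (gt, p) = (g, p) ∧
    (((∀ (g' : ∀ i, A i → ℝ) (p' : (j : L) → {b // b ∈ Bj j} → ℝ),
        memQ A Ij Bj g' p' →
        (∑ i ∈ Y, ∑ α : A i, Real.log (h i α) * g' i α) ≤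
          ∑ i ∈ Y, ∑ α : A i, Real.log (h i α) * g i α) ∧
      (∀ i (α : A i), ∃ n : ℤ, g i α = n) ∧
      (∀ j (b : {b // b ∈ Bj j}), ∃ n : ℤ, p j b = n))
      ↔
     ((∀ (gt' : (i : (Y : Finset I)) → {α : A i.val // α ≠ asel i.val} → ℝ)
          (p' : (j : L) → {b // b ∈ Bj j} → ℝ),
        memQt A Ij Bj Y asel t ht gt' p' →
        (∑ i : (Y : Finset I), ∑ α : {α : A i.val // α ≠ asel i.val},
            Real.log (h i.val α.val / h i.val (asel i.val)) * gt' i α) ≤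
          ∑ i : (Y : Finset I), ∑ α : {α : A i.val // α ≠ asel i.val},
            Real.log (h i.val α.val / h i.val (asel i.val)) * gt i α) ∧
      (∀ (i : (Y : Finset I)) (α : {α : A i.val // α ≠ asel i.val}),
        ∃ n : ℤ, gt i α = n) ∧
      (∀ j (b : {b // b ∈ Bj j}), ∃ n : ℤ, p j b = n))) ∧
    (((∀ (g' : ∀ i, A i → ℝ) (p' : (j : L) → {b // b ∈ Bj j} → ℝ),
        memQ A Ij Bj g' p' →
        (∑ i ∈ Y, ∑ α : A i, Real.log (h i α) * g' i α) ≤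
          ∑ i ∈ Y, ∑ α : A i, Real.log (h i α) * g i α) ∧
      (∀ i (α : A i), ∃ n : ℤ, g i α = n) ∧
      (∀ j (b : {b // b ∈ Bj j}), ∃ n : ℤ, p j b = n)) →
      ∃! x : ∀ i, A i, x ∈ GlobalB A Ij Bj ∧ g = XiBar A x ∧
        ∀ (i : (Y : Finset I)) (α : {α : A i.val // α ≠ asel i.val}),
          gt i α = if x i.val = α.val then 1 else 0) := by
  subst hgt
  change memQt A Ij Bj Y asel t ht (restr Y asel g) p ∧ _
  have hobj := fun g' p' (hm : memQ A Ij Bj g' p') =>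
    objective_eq Y asel h hpos g' (sum_g_eq_one hcover hm)
  have hobj0 := hobj g p hmem
  refine ⟨memQt_restr Y asel t ht hmem, Vmap_restr hcover Y asel t ht hmem, ⟨?_, ?_⟩, ?_⟩
  · rintro ⟨hmax, hg, hp⟩
    refine ⟨fun gt' p' hm' => ?_, fun i α => hg i.val α.val, hp⟩
    have hV := memQ_Vmap hm'
    have h1 := hmax _ _ hV
    rw [hobj _ _ hV, hobj0, restr_Vmap] at h1
    exact le_of_add_le_add_right h1
  · rintro ⟨hmax, -, hp⟩
    refine ⟨fun g' p' hm' => ?_, g_integral hcover hmem hp, hp⟩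
    rw [hobj _ _ hm', hobj0]
    exact add_le_add_left (hmax _ _ (memQt_restr Y asel t ht hm')) _
  · rintro ⟨-, -, hp⟩
    obtain ⟨x, hx, rfl⟩ := exists_config hcover hmem hp
    exact ⟨x, ⟨hx, rfl, fun _ _ => rfl⟩, fun y hy => XiBar_injective_s9 hy.2.1.symm⟩
end

section
/- Graph-cover pseudoconfigurations yield LP pseudoconfigurations (one direction of Theorem 2): let M ≥ 1, let Π_{j,i} be a permutation of {1,…,M} for each j ∈ L and i ∈ I_j, and let x^{(M)} = (x_{i,m})_{i∈I, 1≤m≤M} with x_{i,m} ∈ A_i be a graph-cover pseudoconfiguration, i.e. (x_{i,Π_{j,i}(m)})_{i∈I_j} ∈ B_j for every j ∈ L and every m ∈ {1,…,M}. Define ḡ ∈ ℝ^N by g_i^{(α)} = |{m : x_{i,m} = α}|/M (the normalized graph-cover pseudoconfiguration vector). Then there exists p such that (ḡ, p) ∈ Q. -/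
/-!
Each check `j` of the cover has `M` copies, and copy `m` sees the local configuration
`w m = (x_{i, Π_{j,i}(m)})_{i ∈ I_j} ∈ B_j`. Take `p_j` to be the empirical distribution of
`w 1, …, w M`. It is a probability distribution on `B_j`, and its marginal at `i` is the fraction
of `m` with `x_{i, Π_{j,i}(m)} = α`; since `Π_{j,i}` is a bijection this equals the fraction of
`m` with `x_{i,m} = α`, which is independent of `j`.
-/

open Finset

/-- **graph-cover ⟹ LP pseudoconfiguration.** If `x^{(M)}` is a graph-cover
pseudoconfiguration of degree `M ≥ 1` (with connection permutations `Π_{j,i}`), then its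
normalized pseudoconfiguration vector `g_i^{(α)} = |{m : x_{i,m} = α}|/M` extends to a point
of the polytope `Q`. -/
theorem stmt10
    {I : Type} [Fintype I] [DecidableEq I]
    (A : I → Type) [∀ i, Fintype (A i)] [∀ i, DecidableEq (A i)]
    {L : Type} [Fintype L]
    (Ij : L → Finset I) (hIjne : ∀ j, (Ij j).Nonempty)
    (Bj : (j : L) → Finset ((i : (Ij j : Finset I)) → A i.val))
    (hBjne : ∀ j, (Bj j).Nonempty)
    (hA : ∀ i, 2 ≤ Fintype.card (A i))
    (hcover : ∀ i : I, ∃ j : L, i ∈ Ij j)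
    (M : ℕ) (hM : 1 ≤ M)
    (Pi : (j : L) → (i : (Ij j : Finset I)) → Equiv.Perm (Fin M))
    (x : (i : I) → Fin M → A i)
    (hcov : ∀ (j : L) (m : Fin M),
      (fun i : (Ij j : Finset I) => x i.val (Pi j i m)) ∈ Bj j)
    (g : ∀ i, A i → ℝ)
    (hg : ∀ i (α : A i),
      g i α = ((Finset.univ.filter (fun m : Fin M => x i m = α)).card : ℝ) / M) :
    ∃ p : (j : L) → {b // b ∈ Bj j} → ℝ, memQ A Ij Bj g p := by
  classical
  have hM0 : (M : ℝ) ≠ 0 := by positivity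
  let w : (j : L) → Fin M → {b // b ∈ Bj j} := fun j m => ⟨_, hcov j m⟩
  refine ⟨fun j b => ∑ m, if w j m = b then (M : ℝ)⁻¹ else 0, ?_, ?_, ?_⟩
  · intro j b
    exact Finset.sum_nonneg fun m _ => by split_ifs <;> positivity
  · intro j
    rw [Finset.sum_comm]
    simp [hM0]
  · intro j i α
    -- Exchanging the sums, each copy `m` contributes only through `b = w j m`.
    have hmarg : (∑ b : {b // b ∈ Bj j},
          if b.val i = α then ∑ m, (if w j m = b then (M : ℝ)⁻¹ else 0) else 0)
        = ∑ m, if x i.val (Pi j i m) = α then (M : ℝ)⁻¹ else 0 := by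
      calc _ = ∑ b : {b // b ∈ Bj j}, ∑ m,
            if w j m = b then (if b.val i = α then (M : ℝ)⁻¹ else 0) else 0 := by
            refine Finset.sum_congr rfl fun b _ => ?_
            by_cases hb : b.val i = α <;> simp [hb]
        _ = _ := by
            rw [Finset.sum_comm]
            simp [w]
    rw [hmarg, Equiv.sum_comp (Pi j i) fun m => if x i.val m = α then (M : ℝ)⁻¹ else 0, hg,
      ← Finset.sum_filter, Finset.sum_const, nsmul_eq_mul, div_eq_mul_inv]
end

section
/- LP pseudoconfigurations with rational coordinates yield graph-cover pseudoconfigurations (converse direction of Theorem 2): if (ḡ, p) ∈ Q and all coordinates of ḡ and p are rational numbers, then there exist an integer M ≥ 1, permutations Π_{j,i} of {1,…,M} for each j ∈ L and i ∈ I_j, and a graph-cover pseudoconfiguration x^{(M)} = (x_{i,m})_{i∈I, 1≤m≤M} (i.e. (x_{i,Π_{j,i}(m)})_{i∈I_j} ∈ B_j for every j ∈ L and m) whose normalized pseudoconfiguration vector satisfies g_i^{(α)} = |{m : x_{i,m} = α}|/M for all i ∈ I, α ∈ A_i. -/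
/-!
After clearing denominators, `M * p j b` is a natural number for all `j` and `b`, and for fixed `j`
these numbers sum to `M`. So each check `j` (an element of `L`) can be replaced by `M` copies,
exactly `M * p j b` of which see the local configuration `b` (`exists_map_card_fiber`). The
consistency equations of `Q` say that the number of copies of `j` showing the symbol `α` at
position `i` is `M * g i α`, which does not depend on `j`. Hence the labels of the `M` copies of `i`
may be read off from any one check containing `i`, and those seen by any other check containing `i`
agree with them up to a permutation of the copies (`exists_perm_comp_eq`).
-/

open Finset

/-- Nonnegative rationals indexed by a finite type have a common positive denominator. -/
lemma exists_common_denominator {ι : Type*} [Fintype ι] (q : ι → ℚ) (hq : ∀ i, 0 ≤ q i) :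
    ∃ M : ℕ, 1 ≤ M ∧ ∃ n : ι → ℕ, ∀ i, q i * M = n i := by
  refine ⟨∏ i, (q i).den, Finset.prod_pos fun i _ => (q i).pos, ?_⟩
  have h : ∀ i, ∃ k : ℕ, q i * ((∏ i, (q i).den : ℕ) : ℚ) = k := by
    intro i
    obtain ⟨c, hc⟩ := Finset.dvd_prod_of_mem (fun i => (q i).den) (Finset.mem_univ i)
    refine ⟨(q i).num.toNat * c, ?_⟩
    have hn : (((q i).num.toNat : ℕ) : ℚ) = (q i).num := by
      exact_mod_cast congrArg (Int.cast : ℤ → ℚ) (Int.toNat_of_nonneg (Rat.num_nonneg.2 (hq i)))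
    rw [hc]
    push_cast
    rw [hn, ← mul_assoc, Rat.mul_den_eq_num]
  choose n hn using h
  exact ⟨n, hn⟩

/-- Multiplicities `n b` summing to `M` are the fibre sizes of some map out of `Fin M`. -/
lemma exists_map_card_fiber {β : Type*} [Fintype β] [DecidableEq β] {M : ℕ} (n : β → ℕ)
    (hn : ∑ b, n b = M) :
    ∃ f : Fin M → β, ∀ b, (Finset.univ.filter (fun m => f m = b)).card = n b := by
  have e : Fin M ≃ Σ b, Fin (n b) := Fintype.equivOfCardEq (by simp [hn])
  refine ⟨fun m => (e m).1, fun b => ?_⟩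
  rw [← Fintype.card_subtype]
  have e' : {m // (e m).1 = b} ≃ Fin (n b) :=
    (e.subtypeEquiv (q := fun s => s.1 = b) fun _ => Iff.rfl).trans (Equiv.sigmaSubtype b)
  simpa using Fintype.card_congr e'

/-- Maps with the same fibre sizes differ by a permutation of their domain. -/
lemma exists_perm_comp_eq {κ α : Type*} [Fintype κ] [DecidableEq α] (u v : κ → α)
    (h : ∀ a, (Finset.univ.filter (fun m => u m = a)).card
      = (Finset.univ.filter (fun m => v m = a)).card) :
    ∃ σ : Equiv.Perm κ, ∀ m, u (σ m) = v m := by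
  have e : ∀ a, {m // v m = a} ≃ {m // u m = a} := fun a =>
    Fintype.equivOfCardEq (by rw [Fintype.card_subtype, Fintype.card_subtype, h a])
  exact ⟨Equiv.ofFiberEquiv e, Equiv.ofFiberEquiv_map e⟩

/-- **rational LP pseudoconfiguration ⟹ graph-cover pseudoconfiguration.**
If `(ḡ, p) ∈ Q` has all rational coordinates, then there exist `M ≥ 1`, permutations
`Π_{j,i}` and a graph-cover pseudoconfiguration of degree `M` whose normalized
pseudoconfiguration vector is `ḡ`. -/
theorem stmt11
    {I : Type} [Fintype I] [DecidableEq I]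
    (A : I → Type) [∀ i, Fintype (A i)] [∀ i, DecidableEq (A i)]
    {L : Type} [Fintype L]
    (Ij : L → Finset I) (hIjne : ∀ j, (Ij j).Nonempty)
    (Bj : (j : L) → Finset ((i : (Ij j : Finset I)) → A i.val))
    (hBjne : ∀ j, (Bj j).Nonempty)
    (hA : ∀ i, 2 ≤ Fintype.card (A i))
    (hcover : ∀ i : I, ∃ j : L, i ∈ Ij j)
    (g : ∀ i, A i → ℝ) (p : (j : L) → {b // b ∈ Bj j} → ℝ)
    (hmem : memQ A Ij Bj g p)
    (hgrat : ∀ i (α : A i), ∃ q : ℚ, g i α = q)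
    (hprat : ∀ j (b : {b // b ∈ Bj j}), ∃ q : ℚ, p j b = q) :
    ∃ (M : ℕ), 1 ≤ M ∧
      ∃ (Pi : (j : L) → (i : (Ij j : Finset I)) → Equiv.Perm (Fin M))
        (x : (i : I) → Fin M → A i),
        (∀ (j : L) (m : Fin M),
          (fun i : (Ij j : Finset I) => x i.val (Pi j i m)) ∈ Bj j) ∧
        (∀ i (α : A i),
          g i α = ((Finset.univ.filter (fun m : Fin M => x i m = α)).card : ℝ) / M) := by
  obtain ⟨hp0, hp1, hpg⟩ := hmem
  choose q hq using hprat
  obtain ⟨M, hM, n, hn⟩ := exists_common_denominator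
    (fun s : Σ j, {b // b ∈ Bj j} => q s.1 s.2)
    (fun s => by have := hp0 s.1 s.2; rw [hq] at this; exact_mod_cast this)
  have hnp : ∀ j b, p j b * M = n ⟨j, b⟩ := by
    intro j b
    rw [hq]
    exact_mod_cast hn ⟨j, b⟩
  have hsum : ∀ j, ∑ b, n ⟨j, b⟩ = M := by
    intro j
    have : ((∑ b, n ⟨j, b⟩ : ℕ) : ℝ) = M := by
      push_cast
      simp_rw [← hnp, ← Finset.sum_mul, hp1, one_mul]
    exact_mod_cast this
  -- `f j m` is the local configuration that the `m`-th copy of the check `j` sees.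
  choose f hf using fun j => exists_map_card_fiber (fun b => n ⟨j, b⟩) (hsum j)
  -- The number of copies of `j` showing `α` at position `i` depends on `i` and `α` only.
  have hcount : ∀ j (i : (Ij j : Finset I)) (α : A i.val),
      ((Finset.univ.filter (fun m => (f j m).val i = α)).card : ℝ) = g i.val α * M := by
    intro j i α
    rw [hpg j i α, Finset.sum_mul, Finset.card_filter]
    push_cast
    rw [← Finset.sum_fiberwise Finset.univ (f j)]
    refine Finset.sum_congr rfl fun b _ => ?_
    rw [Finset.sum_congr rfl (g := fun _ => if b.val i = α then (1 : ℝ) else 0)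
      (fun m hm => by rw [(Finset.mem_filter.1 hm).2])]
    rw [Finset.sum_const, hf, nsmul_eq_mul, ← hnp]
    split_ifs <;> simp
  choose J hJ using hcover
  let x : (i : I) → Fin M → A i := fun i m => (f (J i) m).val ⟨i, hJ i⟩
  have hx : ∀ i (α : A i),
      ((Finset.univ.filter (fun m => x i m = α)).card : ℝ) = g i α * M :=
    fun i α => hcount (J i) ⟨i, hJ i⟩ α
  have hperm : ∀ j (i : (Ij j : Finset I)), ∃ σ : Equiv.Perm (Fin M),
      ∀ m, x i.val (σ m) = (f j m).val i := fun j i =>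
    exists_perm_comp_eq _ _ fun α => by
      exact_mod_cast (hx i.val α).trans (hcount j i α).symm
  choose Pi hPi using hperm
  refine ⟨M, hM, Pi, x, fun j m => ?_, fun i α => ?_⟩
  · simp_rw [hPi]
    exact (f j m).property
  · have hM0 : (M : ℝ) ≠ 0 := by positivity
    rw [hx, mul_div_cancel_right₀ _ hM0]
end

section
/- Geometric characterization of the system pseudodistance: let x̄ ∈ B and κ = (ḡ, p) ∈ Q, and suppose the mean signal m = (Σ_{α∈A_i} g_i^{(α)} s_i(α))_{i∈Y} differs from the transmitted signal t = (s_i(x̄_i))_{i∈Y}. Then the decision boundary D = {y ∈ ℂ^Y : Σ_{i∈Y} Σ_{α∈A_i} g_i^{(α)} |y_i − s_i(α)|² = Σ_{i∈Y} |y_i − s_i(x̄_i)|²} is a real affine hyperplane of ℂ^Y (regarded as a real inner product space of dimension 2|Y|), and the Euclidean distance from the point t to D equals d_eff(x̄, κ)/2, where d_eff(x̄, κ) = (Σ_{i∈Y} Σ_{α∈A_i} g_i^{(α)} |s_i(α) − s_i(x̄_i)|²) / ‖m − t‖. -/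
/-!
Write `n = m - t` and `K = ∑ i, ∑ α, g i α * ‖s i α - t i‖ ^ 2`, so that `deff = K / ‖n‖`.
Each `g i` is a probability vector on `A i`, as a marginal of a probability vector `p j` with
`i ∈ Ij j`. Expanding every square around `t i` and averaging with the weights `g i`, the terms
`‖z i - t i‖ ^ 2` on the two sides of the equation of `D` cancel, which leaves the affine equation
`2 * Re ⟪n, z - t⟫ = K` (`boundary_iff`). As `n ≠ 0`, this is a real hyperplane with normal `n`,
at distance `(K / 2) / ‖n‖` from `t` (`infDist_hyperplane`).
-/

open Finset

theorem memQ_nonneg {I : Type} [Fintype I] [DecidableEq I]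
    {A : I → Type} [∀ i, Fintype (A i)] [∀ i, DecidableEq (A i)]
    {L : Type} [Fintype L] {Ij : L → Finset I}
    {Bj : (j : L) → Finset ((i : (Ij j : Finset I)) → A i.val)}
    (hcover : ∀ i : I, ∃ j : L, i ∈ Ij j)
    {g : ∀ i, A i → ℝ} {p : (j : L) → {b // b ∈ Bj j} → ℝ}
    (hmem : memQ A Ij Bj g p) (i : I) (α : A i) : 0 ≤ g i α := by
  obtain ⟨hp, -, hg⟩ := hmem
  obtain ⟨j, hj⟩ := hcover i
  rw [hg j ⟨i, hj⟩ α]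
  refine Finset.sum_nonneg fun b _ => ?_
  split_ifs
  · exact hp j b
  · exact le_rfl

theorem memQ_sum_eq_one {I : Type} [Fintype I] [DecidableEq I]
    {A : I → Type} [∀ i, Fintype (A i)] [∀ i, DecidableEq (A i)]
    {L : Type} [Fintype L] {Ij : L → Finset I}
    {Bj : (j : L) → Finset ((i : (Ij j : Finset I)) → A i.val)}
    (hcover : ∀ i : I, ∃ j : L, i ∈ Ij j)
    {g : ∀ i, A i → ℝ} {p : (j : L) → {b // b ∈ Bj j} → ℝ}
    (hmem : memQ A Ij Bj g p) (i : I) : ∑ α, g i α = 1 := by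
  obtain ⟨-, hp, hg⟩ := hmem
  obtain ⟨j, hj⟩ := hcover i
  rw [Finset.sum_congr rfl fun α _ => hg j ⟨i, hj⟩ α, Finset.sum_comm, ← hp j]
  exact Finset.sum_congr rfl fun b _ => by simp

/-- The squared distance to a random point with weights `w`, averaged, and expanded around `τ`. -/
theorem weighted_sq_expand {ι : Type} [Fintype ι] (w : ι → ℝ) (hw : ∑ a, w a = 1)
    (σ : ι → ℂ) (τ μ ζ : ℂ) (hμ : μ = ∑ a, (w a : ℂ) * σ a) :
    ∑ a, w a * ‖ζ - σ a‖ ^ 2 =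
      ‖ζ - τ‖ ^ 2 - 2 * (inner ℂ (μ - τ) (ζ - τ)).re + ∑ a, w a * ‖σ a - τ‖ ^ 2 := by
  have hre : μ.re = ∑ a, w a * (σ a).re := by simp [hμ]
  have him : μ.im = ∑ a, w a * (σ a).im := by simp [hμ]
  have key : ∀ a, w a * ‖ζ - σ a‖ ^ 2 = w a * (‖ζ - τ‖ ^ 2 + 2 * (τ.re * (ζ - τ).re
      + τ.im * (ζ - τ).im)) - 2 * (ζ - τ).re * (w a * (σ a).re)
      - 2 * (ζ - τ).im * (w a * (σ a).im) + w a * ‖σ a - τ‖ ^ 2 := by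
    intro a
    simp only [Complex.sq_norm, Complex.normSq_apply, Complex.sub_re, Complex.sub_im]
    ring
  rw [Finset.sum_congr rfl fun a _ => key a, Finset.sum_add_distrib, Finset.sum_sub_distrib,
    Finset.sum_sub_distrib, ← Finset.sum_mul, ← Finset.mul_sum, ← Finset.mul_sum, hw, ← hre, ← him]
  simp only [RCLike.inner_apply, Complex.mul_re, Complex.conj_re, Complex.conj_im, Complex.sub_re,
    Complex.sub_im]
  ring

/-- The quadratic equation of the decision boundary is affine, because the weights at each
coordinate sum to one. -/
theorem boundary_iff {κ : Type} [Fintype κ] {A : κ → Type} [∀ i, Fintype (A i)]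
    (g : ∀ i, A i → ℝ) (hg : ∀ i, ∑ α, g i α = 1) (s : ∀ i, A i → ℂ)
    (t m : EuclideanSpace ℂ κ) (hm : ∀ i, m i = ∑ α, (g i α : ℂ) * s i α)
    (z : EuclideanSpace ℂ κ) :
    (∑ i, ∑ α, g i α * ‖z i - s i α‖ ^ 2 = ∑ i, ‖z i - t i‖ ^ 2) ↔
      2 * (inner ℂ (m - t) (z - t)).re = ∑ i, ∑ α, g i α * ‖s i α - t i‖ ^ 2 := by
  rw [Finset.sum_congr rfl fun i _ =>
    weighted_sq_expand (g i) (hg i) (s i) (t i) (m i) (z i) (hm i),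
    Finset.sum_add_distrib, Finset.sum_sub_distrib, ← Finset.mul_sum, PiLp.inner_apply,
    Complex.re_sum]
  simp only [PiLp.sub_apply]
  constructor <;> intro h <;> linarith

/-- The distance from `t` to the real hyperplane through `t + (k / ‖n‖ ^ 2) • n` orthogonal
to `n`, for `k ≥ 0`. -/
theorem infDist_hyperplane {E : Type*} [NormedAddCommGroup E] [InnerProductSpace ℂ E]
    (t n : E) (hn : n ≠ 0) (k : ℝ) (hk : 0 ≤ k) :
    Metric.infDist t {z | (inner ℂ n (z - t)).re = k} = k / ‖n‖ := by
  have hn' : 0 < ‖n‖ := norm_pos_iff.mpr hn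
  -- the foot of the perpendicular from `t`
  have hfoot : t + ((k / ‖n‖ ^ 2 : ℝ) : ℂ) • n ∈ {z | (inner ℂ n (z - t)).re = k} := by
    have hself : (inner ℂ n n).re = ‖n‖ ^ 2 := inner_self_eq_norm_sq (𝕜 := ℂ) n
    rw [Set.mem_ofPred_eq, add_sub_cancel_left, inner_smul_right, Complex.re_ofReal_mul, hself]
    field_simp
  apply le_antisymm
  · refine (Metric.infDist_le_dist_of_mem hfoot).trans (le_of_eq ?_)
    rw [dist_self_add_right, norm_smul, Complex.norm_real, Real.norm_of_nonneg (by positivity)]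
    field_simp
  · refine (Metric.le_infDist ⟨_, hfoot⟩).mpr fun z hz => ?_
    rw [div_le_iff₀ hn', dist_comm, dist_eq_norm, mul_comm, ← show _ = k from hz]
    exact (Complex.re_le_norm _).trans (norm_inner_le_norm _ _)

/-- **geometric characterization of the system pseudodistance.** If the mean
signal `m` differs from the transmitted signal `t`, then the decision boundary `D` is a real
affine hyperplane of `ℂ^Y` and the Euclidean distance from `t` to `D` equals
`d_eff(x̄, κ)/2`. -/
theorem stmt14
    {I : Type} [Fintype I] [DecidableEq I]
    (A : I → Type) [∀ i, Fintype (A i)] [∀ i, DecidableEq (A i)]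
    {L : Type} [Fintype L]
    (Ij : L → Finset I) (hIjne : ∀ j, (Ij j).Nonempty)
    (Bj : (j : L) → Finset ((i : (Ij j : Finset I)) → A i.val))
    (hBjne : ∀ j, (Bj j).Nonempty)
    (hA : ∀ i, 2 ≤ Fintype.card (A i))
    (hcover : ∀ i : I, ∃ j : L, i ∈ Ij j)
    (hBne : (GlobalB A Ij Bj).Nonempty)
    (Y : Finset I)
    (s : (i : I) → A i → ℂ)
    (xbar : ∀ i, A i) (hxbar : xbar ∈ GlobalB A Ij Bj)
    (g : ∀ i, A i → ℝ) (p : (j : L) → {b // b ∈ Bj j} → ℝ)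
    (hmem : memQ A Ij Bj g p)
    (t m : EuclideanSpace ℂ (Y : Finset I))
    (htdef : ∀ i : (Y : Finset I), t i = s i.val (xbar i.val))
    (hmdef : ∀ i : (Y : Finset I), m i = ∑ α : A i.val, (g i.val α : ℂ) * s i.val α)
    (hmt : m ≠ t)
    (D : Set (EuclideanSpace ℂ (Y : Finset I)))
    (hD : D = {z | ∑ i : (Y : Finset I), ∑ α : A i.val,
        g i.val α * ‖z i - s i.val α‖ ^ 2 =
      ∑ i : (Y : Finset I), ‖z i - s i.val (xbar i.val)‖ ^ 2})
    (deff : ℝ)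
    (hdeff : deff = (∑ i : (Y : Finset I), ∑ α : A i.val,
        g i.val α * ‖s i.val α - s i.val (xbar i.val)‖ ^ 2) / ‖m - t‖) :
    (∃ φ : EuclideanSpace ℂ (Y : Finset I) →L[ℝ] ℝ, φ ≠ 0 ∧
      ∃ c : ℝ, D = {z | φ z = c}) ∧
    Metric.infDist t D = deff / 2 := by
  have hn : m - t ≠ 0 := sub_ne_zero.mpr hmt
  simp only [← htdef] at hD hdeff
  set K : ℝ := ∑ i : (Y : Finset I), ∑ α : A i.val, g i.val α * ‖s i.val α - t i‖ ^ 2 with hK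
  have hK0 : 0 ≤ K := Finset.sum_nonneg fun i _ => Finset.sum_nonneg fun α _ =>
    mul_nonneg (memQ_nonneg hcover hmem _ _) (sq_nonneg _)
  have hD' : D = {z | (inner ℂ (m - t) (z - t)).re = K / 2} := by
    rw [hD]
    ext z
    rw [Set.mem_ofPred_eq, Set.mem_ofPred_eq,
      boundary_iff (fun i : (Y : Finset I) => g i.val)
        (fun i => memQ_sum_eq_one hcover hmem i.val) (fun i => s i.val) t m hmdef z, ← hK]
    constructor <;> intro h <;> linarith
  refine ⟨⟨Complex.reCLM.comp ((innerSL ℂ (m - t)).restrictScalars ℝ), fun h => ?_,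
    K / 2 + (inner ℂ (m - t) t).re, ?_⟩, ?_⟩
  · have h1 := DFunLike.congr_fun h (m - t)
    have h2 : ‖m - t‖ ^ 2 = 0 := (inner_self_eq_norm_sq (𝕜 := ℂ) (m - t)).symm.trans h1
    exact hn (norm_eq_zero.mp (pow_eq_zero_iff two_ne_zero |>.mp h2))
  · rw [hD']
    ext z
    change (inner ℂ (m - t) (z - t)).re = K / 2 ↔
      (inner ℂ (m - t) z).re = K / 2 + (inner ℂ (m - t) t).re
    rw [inner_sub_right, Complex.sub_re, sub_eq_iff_eq_add]
  · rw [hD', infDist_hyperplane t (m - t) hn _ (by positivity), hdeff]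
    ring
end

section
/- Pairwise error probability of the LP receiver over complex AWGN: let x̄ ∈ B and κ = (ḡ, p) ∈ Q with m ≠ t (notation as below), and let y = t + n where n = (n_i)_{i∈Y} has all real and imaginary parts independent real Gaussian random variables with mean 0 and variance σ² (σ > 0). Then the probability that the receiver favours κ over x̄, i.e. P( Σ_{i∈Y} Σ_{α∈A_i} g_i^{(α)} |y_i − s_i(α)|² < Σ_{i∈Y} |y_i − s_i(x̄_i)|² ), equals Q(d_eff(x̄, κ)/(2σ)), where Q(x) = (1/√(2π)) ∫_x^∞ exp(−u²/2) du is the Gaussian tail function. -/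
/-!
Write `d = m - t` and `G = ∑ i, ∑ α, g_i(α) |s_i(α) - t_i|²`. Since the weights `g_i(α)` sum to `1`
over `α`, completing the square around `t` gives, for a noise vector `n`,
`∑ i, ∑ α, g_i(α) |t_i + n_i - s_i(α)|² = ∑ i, |n_i|² - 2 ∑ i, Re (n_i conj d_i) + G`
(`weighted_dist_sq`). The quadratic terms in `n` cancel in the comparison with `∑ i, |n_i|²`, so the
error event is the half-space `G < 2 ∑ i, Re (n_i conj d_i)`. The linear form
`∑ i, Re (n_i conj d_i) / (σ ‖d‖)` of the noise is standard Gaussian, which is seen on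
characteristic functions (`map_linear_form`), and `G / (2 σ ‖d‖) = d_eff / (2 σ)`.
-/

open Finset

open MeasureTheory ProbabilityTheory

/-- The marginals of a point of the polytope are normalized at every index that is covered by some
local behavior. -/
lemma sum_marginal_eq_one
    {I : Type} [Fintype I] [DecidableEq I]
    {A : I → Type} [∀ i, Fintype (A i)] [∀ i, DecidableEq (A i)]
    {L : Type} [Fintype L]
    {Ij : L → Finset I} {Bj : (j : L) → Finset ((i : (Ij j : Finset I)) → A i.val)}
    {g : ∀ i, A i → ℝ} {p : (j : L) → {b // b ∈ Bj j} → ℝ}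
    (hmem : memQ A Ij Bj g p) {i : I} {j : L} (hij : i ∈ Ij j) :
    ∑ α, g i α = 1 := by
  obtain ⟨-, hp, hg⟩ := hmem
  rw [← hp j, Finset.sum_congr rfl fun α _ => hg j ⟨i, hij⟩ α, Finset.sum_comm]
  simp

/-- Weighted squared distance from `w + z` to points `s α`, expanded in the displacement `z`;
the linear term involves only the weighted mean `c` of the points. -/
lemma weighted_dist_sq {ι : Type*} [Fintype ι] (g : ι → ℝ) (hg : ∑ α, g α = 1)
    (s : ι → ℂ) (w z c : ℂ) (hc : c = ∑ α, (g α : ℂ) * s α) :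
    ∑ α, g α * ‖(w + z) - s α‖ ^ 2
      = ‖z‖ ^ 2 - 2 * (z.re * (c - w).re + z.im * (c - w).im)
        + ∑ α, g α * ‖s α - w‖ ^ 2 := by
  have hre : c.re = ∑ α, g α * (s α).re := by simp [hc]
  have him : c.im = ∑ α, g α * (s α).im := by simp [hc]
  have key : ∀ α, g α * ‖(w + z) - s α‖ ^ 2
      = g α * (‖z‖ ^ 2 + 2 * (z.re * w.re + z.im * w.im))
        - (2 * z.re) * (g α * (s α).re) - (2 * z.im) * (g α * (s α).im)
        + g α * ‖s α - w‖ ^ 2 := by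
    intro α
    simp only [Complex.sq_norm, Complex.normSq_apply, Complex.sub_re, Complex.sub_im,
      Complex.add_re, Complex.add_im]
    ring
  rw [Finset.sum_congr rfl fun α _ => key α, Finset.sum_add_distrib, Finset.sum_sub_distrib,
    Finset.sum_sub_distrib, ← Finset.sum_mul, ← Finset.mul_sum, ← Finset.mul_sum, hg, ← hre, ← him,
    Complex.sub_re, Complex.sub_im]
  ring

/-- A linear form of independent centered Gaussians, grouped in pairs, is standard Gaussian as soon
as its variance is `1`. -/
lemma map_linear_form {ι : Type*} [Fintype ι] (v : NNReal) (a b : ι → ℝ)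
    (hv : ∑ i, (a i ^ 2 + b i ^ 2) * (v : ℝ) = 1) :
    (Measure.pi (fun _ : ι => (gaussianReal 0 v).prod (gaussianReal 0 v))).map
      (fun ω : ι → ℝ × ℝ => ∑ i, (a i * (ω i).1 + b i * (ω i).2)) = gaussianReal 0 1 := by
  refine Measure.ext_of_charFun (funext fun r => ?_)
  have hone : ∀ c : ℝ, ∫ x, Complex.exp ((r * c : ℝ) * x * Complex.I) ∂(gaussianReal 0 v)
      = Complex.exp (-(v * (r * c) ^ 2 / 2 : ℝ)) := by
    intro c
    rw [← charFun_apply_real, charFun_gaussianReal]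
    push_cast
    ring_nf
  rw [charFun_apply_real, integral_map (by fun_prop) (by fun_prop)]
  have hprod : ∀ ω : ι → ℝ × ℝ,
      Complex.exp (r * (∑ i, (a i * (ω i).1 + b i * (ω i).2) : ℝ) * Complex.I)
      = ∏ i, (Complex.exp ((r * a i : ℝ) * (ω i).1 * Complex.I)
          * Complex.exp ((r * b i : ℝ) * (ω i).2 * Complex.I)) := by
    intro ω
    simp_rw [← Complex.exp_add]
    rw [← Complex.exp_sum]
    push_cast
    rw [Finset.mul_sum, Finset.sum_mul]
    congr 1
    exact Finset.sum_congr rfl fun i _ => by ring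
  simp_rw [hprod]
  rw [integral_fintype_prod_eq_prod (f := fun i (x : ℝ × ℝ) =>
    Complex.exp ((r * a i : ℝ) * x.1 * Complex.I) * Complex.exp ((r * b i : ℝ) * x.2 * Complex.I))]
  have hpair : ∀ i, ∫ x : ℝ × ℝ, Complex.exp ((r * a i : ℝ) * x.1 * Complex.I)
        * Complex.exp ((r * b i : ℝ) * x.2 * Complex.I)
        ∂((gaussianReal 0 v).prod (gaussianReal 0 v))
      = Complex.exp (-(r ^ 2 / 2 * ((a i ^ 2 + b i ^ 2) * (v : ℝ)) : ℝ)) := by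
    intro i
    rw [integral_prod_mul (fun x : ℝ => Complex.exp ((r * a i : ℝ) * x * Complex.I))
      (fun x : ℝ => Complex.exp ((r * b i : ℝ) * x * Complex.I)), hone, hone, ← Complex.exp_add]
    congr 1
    push_cast
    ring
  rw [Finset.prod_congr rfl fun i _ => hpair i, ← Complex.exp_sum, Finset.sum_neg_distrib,
    ← Complex.ofReal_sum, ← Finset.mul_sum, hv, charFun_gaussianReal]
  congr 1
  push_cast
  simp

lemma gaussianReal_Ioi (c : ℝ) :
    gaussianReal 0 1 (Set.Ioi c) = ENNReal.ofReal ((1 / Real.sqrt (2 * Real.pi)) *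
      ∫ u in Set.Ioi c, Real.exp (-u ^ 2 / 2)) := by
  rw [gaussianReal_apply_eq_integral 0 one_ne_zero, ← integral_const_mul]
  simp [gaussianPDFReal]

/-- **pairwise error probability over complex AWGN.** With `y = t + n`, where
all real and imaginary parts of the noise `n` are independent Gaussians of mean `0` and
variance `σ²`, the probability that the LP receiver favours the pseudoconfiguration
`κ = (ḡ, p)` over the transmitted configuration `x̄` equals `Q(d_eff(x̄, κ)/(2σ))`, with
`Q` the Gaussian tail function. -/
theorem stmt15
    {I : Type} [Fintype I] [DecidableEq I]
    (A : I → Type) [∀ i, Fintype (A i)] [∀ i, DecidableEq (A i)]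
    {L : Type} [Fintype L]
    (Ij : L → Finset I) (hIjne : ∀ j, (Ij j).Nonempty)
    (Bj : (j : L) → Finset ((i : (Ij j : Finset I)) → A i.val))
    (hBjne : ∀ j, (Bj j).Nonempty)
    (hA : ∀ i, 2 ≤ Fintype.card (A i))
    (hcover : ∀ i : I, ∃ j : L, i ∈ Ij j)
    (hBne : (GlobalB A Ij Bj).Nonempty)
    (Y : Finset I)
    (s : (i : I) → A i → ℂ)
    (xbar : ∀ i, A i) (hxbar : xbar ∈ GlobalB A Ij Bj)
    (g : ∀ i, A i → ℝ) (p : (j : L) → {b // b ∈ Bj j} → ℝ)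
    (hmem : memQ A Ij Bj g p)
    (σ : ℝ) (hσ : 0 < σ)
    (t m : EuclideanSpace ℂ (Y : Finset I))
    (htdef : ∀ i : (Y : Finset I), t i = s i.val (xbar i.val))
    (hmdef : ∀ i : (Y : Finset I), m i = ∑ α : A i.val, (g i.val α : ℂ) * s i.val α)
    (hmt : m ≠ t)
    (deff : ℝ)
    (hdeff : deff = (∑ i : (Y : Finset I), ∑ α : A i.val,
        g i.val α * ‖s i.val α - s i.val (xbar i.val)‖ ^ 2) / ‖m - t‖)
    (μ : Measure ({i // i ∈ Y} → ℝ × ℝ))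
    (hμ : μ = Measure.pi (fun _ : {i // i ∈ Y} =>
      (gaussianReal 0 ⟨σ ^ 2, sq_nonneg σ⟩).prod (gaussianReal 0 ⟨σ ^ 2, sq_nonneg σ⟩))) :
    μ {ω | ∑ i : (Y : Finset I), ∑ α : A i.val,
        g i.val α *
          ‖(t i + (((ω i).1 : ℂ) + ((ω i).2 : ℂ) * Complex.I)) - s i.val α‖ ^ 2 <
      ∑ i : (Y : Finset I),
        ‖(t i + (((ω i).1 : ℂ) + ((ω i).2 : ℂ) * Complex.I)) - s i.val (xbar i.val)‖ ^ 2}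
    = ENNReal.ofReal ((1 / Real.sqrt (2 * Real.pi)) *
        ∫ u in Set.Ioi (deff / (2 * σ)), Real.exp (-u ^ 2 / 2)) := by
  have hd : 0 < ‖m - t‖ := norm_pos_iff.mpr (sub_ne_zero.mpr hmt)
  have hsd : 0 < σ * ‖m - t‖ := mul_pos hσ hd
  set d := m - t with hddef
  set G := ∑ i : (Y : Finset I), ∑ α : A i.val,
    g i.val α * ‖s i.val α - s i.val (xbar i.val)‖ ^ 2 with hG
  have hvar : ∑ i : (Y : Finset I), (((d i).re / (σ * ‖d‖)) ^ 2 + ((d i).im / (σ * ‖d‖)) ^ 2)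
      * ((⟨σ ^ 2, sq_nonneg σ⟩ : NNReal) : ℝ) = 1 := by
    have hn : ‖d‖ ^ 2 = ∑ i : (Y : Finset I), ((d i).re ^ 2 + (d i).im ^ 2) := by
      rw [EuclideanSpace.norm_sq_eq]
      refine Finset.sum_congr rfl fun i _ => ?_
      rw [Complex.sq_norm, Complex.normSq_apply]
      ring
    have : ∀ i : (Y : Finset I),
        (((d i).re / (σ * ‖d‖)) ^ 2 + ((d i).im / (σ * ‖d‖)) ^ 2)
          * ((⟨σ ^ 2, sq_nonneg σ⟩ : NNReal) : ℝ)
        = ((d i).re ^ 2 + (d i).im ^ 2) / ‖d‖ ^ 2 := by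
      intro i
      change _ * σ ^ 2 = _
      field_simp
    rw [Finset.sum_congr rfl fun i _ => this i, ← Finset.sum_div, ← hn]
    exact div_self (by positivity)
  rw [← gaussianReal_Ioi, ← map_linear_form _ _ _ hvar,
    Measure.map_apply (by fun_prop) measurableSet_Ioi, hμ]
  congr 1
  ext ω
  simp only [Set.mem_ofPred_eq, Set.mem_preimage, Set.mem_Ioi]
  have hlin : ∑ i : (Y : Finset I),
      ((d i).re / (σ * ‖d‖) * (ω i).1 + (d i).im / (σ * ‖d‖) * (ω i).2)
      = (∑ i : (Y : Finset I), ((ω i).1 * (d i).re + (ω i).2 * (d i).im)) / (σ * ‖d‖) := by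
    rw [Finset.sum_div]
    exact Finset.sum_congr rfl fun i _ => by ring
  have hleft : ∀ i : (Y : Finset I), ∑ α : A i.val, g i.val α *
        ‖(t i + (((ω i).1 : ℂ) + ((ω i).2 : ℂ) * Complex.I)) - s i.val α‖ ^ 2
      = ‖((ω i).1 : ℂ) + ((ω i).2 : ℂ) * Complex.I‖ ^ 2
        - 2 * ((ω i).1 * (d i).re + (ω i).2 * (d i).im)
        + ∑ α : A i.val, g i.val α * ‖s i.val α - s i.val (xbar i.val)‖ ^ 2 := by
    intro i
    obtain ⟨j, hj⟩ := hcover i.val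
    rw [weighted_dist_sq _ (sum_marginal_eq_one hmem hj) _ _ _ _ (hmdef i), ← htdef i]
    simp [hddef]
  have hright : ∀ i : (Y : Finset I),
      ‖(t i + (((ω i).1 : ℂ) + ((ω i).2 : ℂ) * Complex.I)) - s i.val (xbar i.val)‖ ^ 2
      = ‖((ω i).1 : ℂ) + ((ω i).2 : ℂ) * Complex.I‖ ^ 2 := by
    intro i
    rw [← htdef i, add_sub_cancel_left]
  rw [Finset.sum_congr rfl fun i _ => hleft i, Finset.sum_congr rfl fun i _ => hright i,
    Finset.sum_add_distrib, Finset.sum_sub_distrib, ← Finset.mul_sum, ← hG, hlin, hdeff,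
    lt_div_iff₀ hsd]
  have hscale : G / ‖d‖ / (2 * σ) * (σ * ‖d‖) = G / 2 := by
    field_simp
  rw [hscale]
  constructor <;> intro h <;> linarith
end
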